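/- arXiv:1705.09707 — 2 statements merged into one kernel-verified Lean document; each statement's English description precedes it below -/
import Mathlib

section
/- Let X be a standard Borel space equipped with a Borel probability measure μ, let Y and Z be standard Borel spaces, let f : X × Y → Z be a Borel map, and let A ⊆ X × Y be a Borel set such that for every x ∈ X the image f(A ∩ ({x} × Y)) is uncountable. Then there exists a μ-conull Borel set X' ⊆ X and a Borel function φ : X' → Y such that (x, φ(x)) ∈ A for every x ∈ X' and the map x ↦ f(x, φ(x)) is injective on X'. -/
open MeasureTheory Set Function
open scoped ENNReal symmDiff

/-- A set in a measurable space is *analytic* if it is the image of a Borel subset of a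
standard Borel space under a Borel (measurable) map. -/
def IsAnalyticS {W : Type*} [MeasurableSpace W] (A : Set W) : Prop :=
  ∃ (Z : Type) (mZ : MeasurableSpace Z), @StandardBorelSpace Z mZ ∧
    ∃ (B : Set Z) (f : Z → W), MeasurableSet[mZ] B ∧ @Measurable Z W mZ _ f ∧ f '' B = A

/-- The smallest `G`-invariant sub-σ-algebra containing the collection `ξ`. -/
def sigmaG (G : Type*) {X : Type*} [Group G] [MulAction G X] (ξ : Set (Set X)) :
    MeasurableSpace X :=
  MeasurableSpace.generateFrom {B | ∃ (g : G), ∃ A ∈ ξ, B = (fun x => g • x) ⁻¹' A}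

/-- The σ-algebra of `G`-invariant measurable sets. -/
def invSigma (G X : Type*) [Group G] [MulAction G X] [MeasurableSpace X] :
    MeasurableSpace X :=
  MeasurableSpace.generateFrom {A | MeasurableSet A ∧ ∀ g : G, (fun x => g • x) ⁻¹' A = A}

/-- Conditional Shannon entropy `H_μ(α | m)` of a countable partition `α` given a
sub-σ-algebra `m`, valued in `[0,∞]`. -/
noncomputable def condEnt {X : Type*} (m : MeasurableSpace X) [mX : MeasurableSpace X]
    (μ : Measure X) {ι : Type*} (α : ι → Set X) : ℝ≥0∞ :=
  ∫⁻ x, ∑' i, ENNReal.ofReal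
    (Real.negMulLog ((μ[(α i).indicator (fun _ => (1 : ℝ)) | m]) x)) ∂μ

/-- Shannon entropy `H_μ(α)` of a countable partition. -/
noncomputable def shEnt {X : Type*} [MeasurableSpace X] (μ : Measure X)
    {ι : Type*} (α : ι → Set X) : ℝ≥0∞ :=
  ∑' i, ENNReal.ofReal (Real.negMulLog (μ (α i)).toReal)

/-- `α` is a countable Borel partition of `X` (indexed by `ℕ`, cells may be empty). -/
def IsPartition {X : Type*} [MeasurableSpace X] (α : ℕ → Set X) : Prop :=
  (∀ i, MeasurableSet (α i)) ∧ Pairwise (Function.onFun Disjoint α) ∧ (⋃ i, α i) = univ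

/-- Every set of `ξ` agrees with an `m`-measurable set modulo `μ`-null sets. -/
def SubsetMod {X : Type*} (m : MeasurableSpace X) [mX : MeasurableSpace X] (μ : Measure X)
    (ξ : Set (Set X)) : Prop :=
  ∀ A ∈ ξ, ∃ B, MeasurableSet[m] B ∧ μ (A ∆ B) = 0

/-- Outer Rokhlin entropy `rh_{G,μ}(ξ | F)`. -/
noncomputable def outerRokhlin (G : Type*) {X : Type*} (ξ : Set (Set X))
    (F : MeasurableSpace X) [Group G] [MulAction G X] [mX : MeasurableSpace X]
    (μ : Measure X) : ℝ≥0∞ :=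
  sInf { h | ∃ α : ℕ → Set X, IsPartition α ∧
      SubsetMod (sigmaG G (Set.range α) ⊔ F ⊔ invSigma G X) μ ξ ∧
      h = condEnt (F ⊔ invSigma G X) μ α }

/-- Rokhlin entropy `rh_G(X, μ | F)`. -/
noncomputable def rokhlin (G : Type*) {X : Type*} (F : MeasurableSpace X) [Group G]
    [MulAction G X] [mX : MeasurableSpace X] (μ : Measure X) : ℝ≥0∞ :=
  outerRokhlin G {A | MeasurableSet A} F μ

/-- Outer Rokhlin entropy `rh_{G,μ}(S | F)` of a sub-σ-algebra `S`. -/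
noncomputable def outerRokhlinAlg (G : Type*) {X : Type*} (S F : MeasurableSpace X) [Group G]
    [MulAction G X] [mX : MeasurableSpace X] (μ : Measure X) : ℝ≥0∞ :=
  outerRokhlin G {A | MeasurableSet[S] A} F μ

/-- The action of `G` on `(X, μ)` is probability-measure-preserving. -/
def IsPmp (G : Type*) {X : Type*} [Group G] [MulAction G X] [MeasurableSpace X]
    (μ : Measure X) : Prop :=
  ∀ g : G, MeasurePreserving (fun x => g • x) μ μ

/-- Aperiodicity: μ-almost-every `G`-orbit is infinite. -/
def Aperiodic (G : Type*) {X : Type*} [Group G] [MulAction G X] [MeasurableSpace X]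
    (μ : Measure X) : Prop :=
  ∀ᵐ x ∂μ, (MulAction.orbit G x).Infinite

/-- Ergodicity of a measure: every invariant Borel set is null or conull. -/
def IsErgodicInv (G : Type*) {X : Type*} [Group G] [MulAction G X] [MeasurableSpace X]
    (ν : Measure X) : Prop :=
  ∀ A : Set X, MeasurableSet A → (∀ g : G, (fun x => g • x) ⁻¹' A = A) → ν A = 0 ∨ ν A = 1

/-- `F` is a `G`-invariant σ-algebra. -/
def InvariantAlg (G : Type*) {X : Type*} (F : MeasurableSpace X) [Group G] [MulAction G X] :
    Prop :=
  ∀ (g : G) (A : Set X), MeasurableSet[F] A → MeasurableSet[F] ((fun x => g • x) ⁻¹' A)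

/-- `F` is countably generated. -/
def CountablyGen {X : Type*} (F : MeasurableSpace X) : Prop :=
  ∃ S : Set (Set X), S.Countable ∧ F = MeasurableSpace.generateFrom S

/-- `π` is an ergodic decomposition map for `μ`. -/
def IsErgDecomp (G : Type*) {X : Type*} [Group G] [MulAction G X] [MeasurableSpace X]
    (μ : Measure X) (π : X → Measure X) : Prop :=
  Measurable π ∧
  (∀ x, IsProbabilityMeasure (π x) ∧ IsPmp G (π x) ∧ IsErgodicInv G (π x)) ∧
  (∀ (g : G) (x : X), π (g • x) = π x) ∧
  (∀ ν : Measure X, IsProbabilityMeasure ν → IsPmp G ν → IsErgodicInv G ν →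
      ν {x | π x = ν} = 1) ∧
  (∀ B : Set X, MeasurableSet B → μ B = ∫⁻ x, π x B ∂μ)

/-!
Code `Z` by an injection into `2^ℕ` and fix a Borel injection `e : X → 2^ℕ`. Borel sections exist
almost everywhere, because the analytic sets met in choosing the digits of a section may be
replaced by measurable hulls. Hence, for almost every `x`, one can choose measurably a nonempty
perfect set `K x ⊆ 2^ℕ` inside the coded image of the fibre over `x`: by the Baire category
theorem, some continuous map from `2^ℕ` into the fibre has a nowhere constant composition with the
coding, and such maps form a Borel subset of the Polish space of all continuous maps.

The key point is a single Borel map `H : 2^ℕ → 2^ℕ` with `e x ∈ H(K x)` for almost every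
`x`. Colour the binary words of a large length `j` at random with two colours. A perfect set meets
an open set in nothing or in an infinite set, so with high probability each nonempty intersection
of `K x` with one of finitely many open sets contains points whose prefixes of length `j` have both
colours. By Fubini one colouring serves all `x` outside a set of small measure. Successive
colourings then allow, by Borel–Cantelli and compactness, to find in `K x` a point whose colours
eventually follow any sequence depending measurably on `x`, and `e x` can be read off its tail.

Finally select `φ x` in the fibre with `H (f (x, φ x)) = e x`: the value `f (x, φ x)` determines
`x`.
-/

section MeasurableSelection

open Filter Topology PiNat

variable {X : Type*} [MeasurableSpace X]

lemma exists_measurable_nat_forall_mem_iUnion {B : ℕ → Set X} (hB : ∀ n, MeasurableSet (B n)) :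
    ∃ f : X → ℕ, Measurable f ∧ ∀ x ∈ ⋃ n, B n, x ∈ B (f x) := by
  classical
  have hex : ∀ x, ∃ n, x ∈ B n ∪ (⋃ m, B m)ᶜ := fun x => by
    by_cases hx : x ∈ ⋃ m, B m
    · exact (mem_iUnion.1 hx).imp fun n hn => Or.inl hn
    · exact ⟨0, Or.inr hx⟩
  refine ⟨fun x => Nat.find (hex x),
    measurable_find hex fun n => (hB n).union (MeasurableSet.iUnion hB).compl, fun x hx => ?_⟩
  exact (Nat.find_spec (hex x)).resolve_right (not_not_intro hx)

lemma exists_measurable_branch {B : List ℕ → Set X} (hB : ∀ l, MeasurableSet (B l)) :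
    ∃ s : X → ℕ → ℕ, Measurable s ∧
      ∀ x ∈ B [], (∀ l, x ∈ B l → x ∈ ⋃ j, B (j :: l)) → ∀ n, x ∈ B (res (s x) n) := by
  let _ : MeasurableSpace (List ℕ) := ⊤
  choose next hnext_meas hnext using fun l =>
    exists_measurable_nat_forall_mem_iUnion fun j => hB (j :: l)
  have hnext_prod : Measurable fun a : List ℕ × X => next a.1 a.2 :=
    measurable_from_prod_countable_right hnext_meas
  let word : ℕ → X → List ℕ := fun n x => Nat.rec [] (fun _ l => next l x :: l) n
  have hword_meas : ∀ n, Measurable (word n) := fun n => by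
    induction n with
    | zero => exact measurable_const
    | succ n ih =>
      have hcons : Measurable fun a : ℕ × List ℕ => a.1 :: a.2 := measurable_of_countable _
      exact hcons.comp ((hnext_prod.comp (ih.prodMk measurable_id)).prodMk ih)
  refine ⟨fun x n => next (word n x) x, measurable_pi_lambda _ fun n =>
    hnext_prod.comp ((hword_meas n).prodMk measurable_id), fun x hx hstep n => ?_⟩
  have hres : ∀ n, res (fun n => next (word n x) x) n = word n x := fun n => by
    induction n with
    | zero => rfl
    | succ n ih => rw [res_succ, ih]
  rw [hres]
  induction n with
  | zero => exact hx
  | succ n ih => exact hnext _ x (hstep _ ih)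

lemma ae_mem_of_mem_toMeasurable (μ : Measure X) [SFinite μ] {A E : Set X} (hAE : A ⊆ E)
    (hE : MeasurableSet E) : ∀ᵐ x ∂μ, x ∈ toMeasurable μ A → x ∈ E := by
  have hnull : μ (toMeasurable μ A ∩ Eᶜ) = 0 := by
    rw [Measure.measure_toMeasurable_inter_of_sFinite hE.compl,
      (disjoint_compl_right_iff_subset.2 hAE).inter_eq, measure_empty]
  filter_upwards [measure_eq_zero_iff_ae_notMem.1 hnull] with x hx hxA
  exact not_not.1 fun hxE => hx ⟨hxA, hxE⟩

lemma eq_of_forall_mem_closure_image_cylinder {X : Type*} [TopologicalSpace X] [T3Space X]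
    {g : (ℕ → ℕ) → X} (hg : Continuous g) {α : ℕ → ℕ} {x : X}
    (hx : ∀ n, x ∈ closure (g '' cylinder α n)) : g α = x := by
  by_contra hne
  obtain ⟨V, hV, hVclosed, hxV⟩ := exists_mem_nhds_isClosed_subset (isOpen_ne.mem_nhds hne)
  obtain ⟨_, ⟨β, n, rfl⟩, hα, hn⟩ :=
    (isTopologicalBasis_cylinders fun _ => ℕ).mem_nhds_iff.1 (hg.continuousAt hV)
  rw [← mem_cylinder_iff_eq.1 hα] at hn
  exact hxV (closure_minimal (image_subset_iff.2 hn) hVclosed (hx n)) rfl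

/- Choosing the digits of a preimage one at a time requires deciding membership in the analytic
sets `g '' C l`; up to a null set these may be replaced by their measurable hulls. -/
theorem exists_measurable_ae_section_of_continuous [TopologicalSpace X] [T3Space X]
    [OpensMeasurableSpace X] (μ : Measure X) [SFinite μ] {g : (ℕ → ℕ) → X} (hg : Continuous g) :
    ∃ s : X → ℕ → ℕ, Measurable s ∧ ∀ᵐ x ∂μ, x ∈ range g → g (s x) = x := by
  let C : List ℕ → Set (ℕ → ℕ) := fun l => {α | res α l.length = l}
  let B : List ℕ → Set X := fun l => toMeasurable μ (g '' C l) ∩ closure (g '' C l)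
  have hB : ∀ l, MeasurableSet (B l) := fun l =>
    (measurableSet_toMeasurable _ _).inter isClosed_closure.measurableSet
  have himage_subset : ∀ l, g '' C l ⊆ B l := fun l =>
    subset_inter (subset_toMeasurable _ _) subset_closure
  have himage_cons : ∀ l, g '' C l ⊆ ⋃ j, B (j :: l) := by
    rintro l _ ⟨α, hα, rfl⟩
    refine mem_iUnion.2 ⟨α l.length, himage_subset _ ⟨α, ?_, rfl⟩⟩
    simpa only [C, mem_ofPred_eq, List.length_cons, res_succ, List.cons.injEq, true_and] using hα
  obtain ⟨s, hs, hsB⟩ := exists_measurable_branch hB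
  refine ⟨s, hs, ?_⟩
  have hae : ∀ᵐ x ∂μ, ∀ l, x ∈ toMeasurable μ (g '' C l) → x ∈ ⋃ j, B (j :: l) :=
    ae_all_iff.2 fun l =>
      ae_mem_of_mem_toMeasurable μ (himage_cons l) (MeasurableSet.iUnion fun j => hB (j :: l))
  filter_upwards [hae] with x hx
  rintro ⟨α, rfl⟩
  have hroot : g α ∈ B [] := himage_subset [] ⟨α, rfl, rfl⟩
  refine eq_of_forall_mem_closure_image_cylinder hg fun n => ?_
  have hmem := (hsB _ hroot (fun l hl => hx l hl.1) n).2
  simpa only [C, res_length, cylinder_eq_res] using hmem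

theorem exists_measurable_ae_uniformization {W : Type*} [MeasurableSpace W] [StandardBorelSpace X]
    [StandardBorelSpace W] [Nonempty W] (μ : Measure X) [SFinite μ] {B : Set (X × W)}
    (hB : MeasurableSet B) :
    ∃ s : X → W, Measurable s ∧ ∀ᵐ x ∂μ, (∃ w, (x, w) ∈ B) → (x, s x) ∈ B := by
  let := upgradeStandardBorel X
  let := upgradeStandardBorel W
  rcases B.eq_empty_or_nonempty with rfl | hne
  · exact ⟨fun _ => Classical.arbitrary W, measurable_const, .of_forall fun x ⟨_, hw⟩ => hw⟩
  obtain ⟨h, hh, rfl⟩ : ∃ h : (ℕ → ℕ) → X × W, Continuous h ∧ range h = B := by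
    have hanalytic := hB.analyticSet
    rw [AnalyticSet] at hanalytic
    exact hanalytic.resolve_left hne.ne_empty
  obtain ⟨s, hs, hsec⟩ := exists_measurable_ae_section_of_continuous μ (continuous_fst.comp hh)
  refine ⟨fun x => (h (s x)).2, (continuous_snd.comp hh).measurable.comp hs, ?_⟩
  filter_upwards [hsec] with x hx
  rintro ⟨w, α, hα⟩
  exact ⟨s x, Prod.ext (hx ⟨α, congrArg Prod.fst hα⟩) rfl⟩

end MeasurableSelection

section NowhereConst

open Filter Topology TopologicalSpace

/-- A map on a topological space is *nowhere constant* if it is not constant on any nonempty open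
set. For `E = ℕ → Bool` this is the weakening of injectivity that still makes the range perfect. -/
def IsNowhereConst {E Q : Type*} [TopologicalSpace E] (h : E → Q) : Prop :=
  ∀ U : Set E, IsOpen U → U.Nonempty → (h '' U).Nontrivial

instance perfectSpace_nat_bool : PerfectSpace (ℕ → Bool) := by
  refine perfectSpace_iff_forall_not_isolated.2 fun z => ?_
  have hlim : Tendsto (fun n => update z n !z n) atTop (𝓝 z) := tendsto_pi_nhds.2 fun i =>
    tendsto_const_nhds.congr' <| (eventually_gt_atTop i).mono fun n hn =>
      (update_of_ne hn.ne _ _).symm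
  have hne : ∀ n, update z n (!z n) ≠ z := fun n h => by simpa using congrFun h n
  exact (tendsto_nhdsWithin_iff.2 ⟨hlim, .of_forall hne⟩).neBot

variable {T E Q : Type*} [TopologicalSpace T]

lemma isNowhereConst_iff_forall_countableBasis [SecondCountableTopology T] {h : T → Q} :
    IsNowhereConst h ↔ ∀ U ∈ countableBasis T, (h '' U).Nontrivial := by
  refine ⟨fun hh U hU => hh U (isOpen_of_mem_countableBasis hU)
    (nonempty_of_mem_countableBasis hU), fun hh V hV ⟨a, ha⟩ => ?_⟩
  obtain ⟨U, hU, -, hUV⟩ := (isBasis_countableBasis T).exists_subset_of_mem_open ha hV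
  exact (hh U hU).mono (image_mono hUV)

lemma IsNowhereConst.perfect_range [CompactSpace T] [TopologicalSpace Q] [T2Space Q] {h : T → Q}
    (hh : IsNowhereConst h) (hcont : Continuous h) : Perfect (range h) := by
  refine ⟨(isCompact_range hcont).isClosed, preperfect_iff_nhds.2 ?_⟩
  rintro _ ⟨a, rfl⟩ V hV
  obtain ⟨U, hUV, hU, haU⟩ := mem_nhds_iff.1 (hcont.continuousAt hV)
  obtain ⟨_, ⟨b, hb, rfl⟩, hne⟩ := (hh U hU ⟨a, haU⟩).exists_ne (h a)
  exact ⟨h b, ⟨hUV hb, mem_range_self b⟩, hne⟩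

lemma exists_isClosed_isNowhereConst_domRestrict [TopologicalSpace E] [SecondCountableTopology E]
    {q : E → Q} {C : Set E} (hC : IsClosed C) (hqC : ¬(q '' C).Countable) :
    ∃ D ⊆ C, IsClosed D ∧ D.Nonempty ∧ IsNowhereConst (D.domRestrict q) := by
  let 𝒰 : Set (Set E) := {U | IsOpen U ∧ (q '' (C ∩ U)).Countable}
  obtain ⟨𝒱, h𝒱, h𝒱𝒰, h𝒱_union⟩ := isOpen_sUnion_countable 𝒰 fun U hU => hU.1
  have hcount : (q '' (C ∩ ⋃₀ 𝒰)).Countable := by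
    rw [← h𝒱_union, sUnion_eq_biUnion, inter_iUnion₂, image_iUnion₂]
    exact h𝒱.biUnion fun U hU => (h𝒱𝒰 hU).2
  refine ⟨C \ ⋃₀ 𝒰, sdiff_subset, hC.sdiff (isOpen_sUnion fun U hU => hU.1), ?_, ?_⟩
  · refine sdiff_nonempty.2 fun hsub => hqC ?_
    rwa [inter_eq_left.2 hsub] at hcount
  · rintro _ ⟨V, hV, rfl⟩ ⟨a, haV⟩
    by_contra hsubsingleton
    refine a.2.2 ⟨V, ⟨hV, ?_⟩, haV⟩
    refine (hcount.union (not_nontrivial_iff.1 hsubsingleton).countable).mono ?_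
    rintro _ ⟨b, ⟨hbC, hbV⟩, rfl⟩
    by_cases hb : b ∈ ⋃₀ 𝒰
    · exact .inl ⟨b, ⟨hbC, hb⟩, rfl⟩
    · exact .inr ⟨⟨b, hbC, hb⟩, hbV, rfl⟩

lemma isOpen_setOf_nontrivial_image_comp [TopologicalSpace E] [TopologicalSpace Q] [T2Space Q]
    {q : E → Q} (hq : Continuous q) (U : Set T) :
    IsOpen {g : C(T, E) | ((q ∘ g) '' U).Nontrivial} := by
  have hset : {g : C(T, E) | ((q ∘ g) '' U).Nontrivial} =
      ⋃ a ∈ U, ⋃ b ∈ U, {g : C(T, E) | q (g a) ≠ q (g b)} := by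
    ext g
    simp only [Set.Nontrivial, exists_mem_image, comp_apply, mem_ofPred_eq, mem_iUnion,
      exists_prop]
  rw [hset]
  exact isOpen_biUnion fun a _ => isOpen_biUnion fun b _ => isOpen_ne_fun
    (hq.comp (continuous_eval_const a)) (hq.comp (continuous_eval_const b))

lemma setOf_isNowhereConst_comp_eq_biInter [SecondCountableTopology T] [TopologicalSpace E]
    (q : E → Q) : {g : C(T, E) | IsNowhereConst (q ∘ g)} =
      ⋂ U ∈ countableBasis T, {g : C(T, E) | ((q ∘ g) '' U).Nontrivial} := by
  ext g
  simp only [isNowhereConst_iff_forall_countableBasis, mem_ofPred_eq, mem_iInter]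

lemma isGδ_setOf_isNowhereConst_comp [SecondCountableTopology T] [TopologicalSpace E]
    [TopologicalSpace Q] [T2Space Q] {q : E → Q} (hq : Continuous q) :
    IsGδ {g : C(T, E) | IsNowhereConst (q ∘ g)} := by
  rw [setOf_isNowhereConst_comp_eq_biInter]
  exact IsGδ.biInter_of_isOpen (countable_countableBasis T) fun U _ =>
    isOpen_setOf_nontrivial_image_comp hq U

lemma IsNowhereConst.dense_setOf_nontrivial_image_comp [CompactSpace T] [T2Space T]
    [TotallyDisconnectedSpace T] [PerfectSpace T] [MetricSpace E] {q : E → Q}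
    (hq : IsNowhereConst q) {U : Set T} (hU : IsOpen U) (hne : U.Nonempty) :
    Dense {g : C(T, E) | ((q ∘ g) '' U).Nontrivial} := by
  classical
  rw [Metric.dense_iff]
  intro f ε hε
  by_cases hf : ((q ∘ f) '' U).Nontrivial
  · exact ⟨f, Metric.mem_ball_self hε, hf⟩
  have hf_const : ∀ a ∈ U, ∀ b ∈ U, q (f a) = q (f b) := fun a ha b hb =>
    not_nontrivial_iff.1 hf (mem_image_of_mem _ ha) (mem_image_of_mem _ hb)
  obtain ⟨c, hc⟩ := hne
  obtain ⟨c', ⟨-, hc'⟩, hne⟩ := preperfect_iff_nhds.1 hU.preperfect c hc univ univ_mem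
  let V : Set T := (U ∩ f ⁻¹' Metric.ball (f c) (ε / 4)) \ {c'}
  have hV : IsOpen V :=
    (hU.inter (Metric.isOpen_ball.preimage f.continuous)).sdiff isClosed_singleton
  obtain ⟨D, hD, hcD, hDV⟩ := compact_exists_isClopen_in_isOpen hV
    (show c ∈ V from ⟨⟨hc, Metric.mem_ball_self (by positivity)⟩, hne.symm⟩)
  obtain ⟨_, ⟨w, hw, rfl⟩, hqw⟩ :=
    (hq (Metric.ball (f c) (ε / 4)) Metric.isOpen_ball
      ⟨f c, Metric.mem_ball_self (by positivity)⟩).exists_ne (q (f c))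
  let g : C(T, E) := ⟨D.piecewise (fun _ => w) f,
    continuous_const.piecewise (fun a ha => by simp [hD.frontier_eq] at ha) f.continuous⟩
  have hgD : ∀ a ∈ D, g a = w := fun a ha => piecewise_eq_of_mem D (fun _ => w) f ha
  have hgDc : ∀ a ∉ D, g a = f a := fun a ha => piecewise_eq_of_notMem D (fun _ => w) f ha
  refine ⟨g, ?_, q (g c), mem_image_of_mem _ hc, q (g c'), mem_image_of_mem _ hc', ?_⟩
  · refine ((ContinuousMap.dist_le (half_pos hε).le).2 fun a => ?_).trans_lt (half_lt_self hε)
    by_cases ha : a ∈ D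
    · rw [hgD a ha]
      have hfa : dist (f a) (f c) < ε / 4 := (hDV ha).1.2
      have hwc : dist w (f c) < ε / 4 := hw
      linarith [dist_triangle_right w (f a) (f c)]
    · rw [hgDc a ha, dist_self]
      exact (half_pos hε).le
  · rw [hgD c hcD, hgDc c' fun h => (hDV h).2 rfl, hf_const c' hc' c hc]
    exact hqw

theorem IsNowhereConst.exists_comp [CompactSpace T] [T2Space T] [TotallyDisconnectedSpace T]
    [PerfectSpace T] [SecondCountableTopology T] [MetricSpace E] [CompleteSpace E] [Nonempty E]
    [TopologicalSpace Q] [T2Space Q] {q : E → Q} (hq : IsNowhereConst q) (hcont : Continuous q) :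
    ∃ g : C(T, E), IsNowhereConst (q ∘ g) := by
  have : Nonempty C(T, E) := ⟨.const T (Classical.arbitrary E)⟩
  have hdense : Dense {g : C(T, E) | IsNowhereConst (q ∘ g)} := by
    rw [setOf_isNowhereConst_comp_eq_biInter]
    exact dense_biInter_of_isOpen (fun U _ => isOpen_setOf_nontrivial_image_comp hcont U)
      (countable_countableBasis T) fun U hU => hq.dense_setOf_nontrivial_image_comp
        (isOpen_of_mem_countableBasis hU) (nonempty_of_mem_countableBasis hU)
  exact hdense.nonempty

variable {P : Type*}

theorem exists_isNowhereConst_comp_of_not_countable [TopologicalSpace P] [PolishSpace P]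
    [TopologicalSpace Q] [T2Space Q] {q : P → Q} (hq : Continuous q) {C : Set P}
    (hC : IsClosed C) (hqC : ¬(q '' C).Countable) :
    ∃ g : C(ℕ → Bool, P), (∀ c, g c ∈ C) ∧ IsNowhereConst (q ∘ g) := by
  let := upgradeIsCompletelyMetrizable P
  obtain ⟨D, hDC, hD, hne, hqD⟩ := exists_isClosed_isNowhereConst_domRestrict hC hqC
  have := hD.completeSpace_coe
  have := hne.to_subtype
  obtain ⟨g, hg⟩ := hqD.exists_comp (T := ℕ → Bool) (hq.comp continuous_subtype_val)
  exact ⟨⟨fun c => g c, by fun_prop⟩, fun c => hDC (g c).2, hg⟩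

lemma polishSpace_continuousMap [CompactSpace T] [MetrizableSpace T] [TopologicalSpace P]
    [PolishSpace P] : PolishSpace C(T, P) := by
  let := metrizableSpaceMetric T
  let := upgradeIsCompletelyMetrizable P
  have : SecondCountableTopology C(T, P) := inferInstance
  infer_instance

lemma exists_polishSpace_borelSpace_continuous [MeasurableSpace P] [StandardBorelSpace P]
    [TopologicalSpace Q] [SecondCountableTopology Q] [MeasurableSpace Q] [OpensMeasurableSpace Q]
    {f : P → Q} (hf : Measurable f) :
    ∃ _ : TopologicalSpace P, PolishSpace P ∧ BorelSpace P ∧ Continuous f := by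
  let := upgradeStandardBorel P
  obtain ⟨t, ht, hf_cont, ht_polish⟩ := hf.exists_continuous
  refine ⟨t, ht_polish, ⟨?_⟩, hf_cont⟩
  rw [eq_borel_upgradeStandardBorel P, borel_eq_borel_of_le ht_polish _ ht]
  infer_instance

variable {X : Type*} [MeasurableSpace X]

theorem exists_measurable_isNowhereConst_comp [TopologicalSpace X] [PolishSpace X] [BorelSpace X]
    [TopologicalSpace P] [PolishSpace P] [Nonempty P]
    [TopologicalSpace Q] [T2Space Q] [MeasurableSpace C(ℕ → Bool, P)] [BorelSpace C(ℕ → Bool, P)]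
    (μ : Measure X) [SFinite μ]
    {p : P → X} (hp : Continuous p) {q : P → Q} (hq : Continuous q)
    (hunc : ∀ᵐ x ∂μ, ¬(q '' (p ⁻¹' {x})).Countable) :
    ∃ g : X → C(ℕ → Bool, P), Measurable g ∧
      ∀ᵐ x ∂μ, (∀ c, p (g x c) = x) ∧ IsNowhereConst (q ∘ g x) := by
  have : PolishSpace C(ℕ → Bool, P) := polishSpace_continuousMap
  have : Nonempty C(ℕ → Bool, P) := ⟨.const _ (Classical.arbitrary P)⟩
  let B : Set (X × C(ℕ → Bool, P)) := {a | (∀ c, p (a.2 c) = a.1) ∧ IsNowhereConst (q ∘ a.2)}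
  have hB : MeasurableSet B := by
    have hclosed : IsClosed {a : X × C(ℕ → Bool, P) | ∀ c, p (a.2 c) = a.1} := by
      rw [ofPred_forall]
      exact isClosed_iInter fun c => isClosed_eq (by fun_prop) continuous_fst
    exact hclosed.measurableSet.inter
      (measurable_snd (isGδ_setOf_isNowhereConst_comp hq).measurableSet)
  obtain ⟨g, hg, hgB⟩ := exists_measurable_ae_uniformization μ hB
  refine ⟨g, hg, ?_⟩
  filter_upwards [hunc, hgB] with x hx hxB
  exact hxB (exists_isNowhereConst_comp_of_not_countable hq (isClosed_singleton.preimage hp) hx)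

theorem exists_measurable_perfect_subset_image [StandardBorelSpace X] [MeasurableSpace P]
    [StandardBorelSpace P] [Nonempty P] [TopologicalSpace Q] [T2Space Q] [SecondCountableTopology Q]
    [MeasurableSpace Q] [OpensMeasurableSpace Q] (μ : Measure X) [SFinite μ]
    {p : P → X} (hp : Measurable p) {q : P → Q} (hq : Measurable q)
    (hunc : ∀ᵐ x ∂μ, ¬(q '' (p ⁻¹' {x})).Countable) :
    ∃ K : X → Set Q, (∀ V, IsOpen V → MeasurableSet {x | (K x ∩ V).Nonempty}) ∧
      ∀ᵐ x ∂μ, Perfect (K x) ∧ (K x).Nonempty ∧ K x ⊆ q '' (p ⁻¹' {x}) := by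
  let := upgradeStandardBorel X
  obtain ⟨_, _, _, hpq⟩ := exists_polishSpace_borelSpace_continuous (hp.prodMk hq)
  have hq_cont : Continuous q := hpq.snd
  let : MeasurableSpace C(ℕ → Bool, P) := borel _
  have : BorelSpace C(ℕ → Bool, P) := ⟨rfl⟩
  obtain ⟨g, hg, hg_ae⟩ := exists_measurable_isNowhereConst_comp μ hpq.fst hq_cont hunc
  refine ⟨fun x => range (q ∘ g x), fun V hV => ?_, ?_⟩
  · have hopen : IsOpen (⋃ c, {h : C(ℕ → Bool, P) | q (h c) ∈ V}) :=
      isOpen_iUnion fun c => hV.preimage (hq_cont.comp (continuous_eval_const c))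
    convert hg hopen.measurableSet using 1
    ext x
    simp only [inter_comm _ V, inter_nonempty, mem_range, comp_apply, mem_ofPred_eq, mem_preimage,
      mem_iUnion]
    grind
  · filter_upwards [hg_ae] with x ⟨hxp, hxq⟩
    refine ⟨hxq.perfect_range (by fun_prop), range_nonempty _, ?_⟩
    rintro _ ⟨c, rfl⟩
    exact ⟨g x c, hxp c, rfl⟩

end NowhereConst

section RandomColouring

open Filter Topology PiNat

lemma isLocallyConstant_res {α : Type*} [TopologicalSpace α] [DiscreteTopology α] (j : ℕ) :
    IsLocallyConstant fun z : ℕ → α => res z j := by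
  refine (IsLocallyConstant.iff_exists_open _).2 fun z =>
    ⟨cylinder z j, isOpen_cylinder _ _ _, self_mem_cylinder _ _, fun w hw => ?_⟩
  rwa [cylinder_eq_res] at hw

lemma eventually_injOn_res {α : Type*} {S : Set (ℕ → α)} (hS : S.Finite) :
    ∀ᶠ j in atTop, InjOn (fun z => res z j) S := by
  refine hS.eventually_all.2 fun z _ => hS.eventually_all.2 fun w _ => ?_
  by_cases hzw : z = w
  · exact .of_forall fun _ _ => hzw
  obtain ⟨n, hn⟩ := ne_iff.1 hzw
  filter_upwards [eventually_gt_atTop n] with j hj hres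
  exact absurd (res_eq_res.1 hres hj) hn

/-- The law of a random colouring of the finite binary words with two colours: the colours of
distinct words are independent fair coin tosses. -/
noncomputable def fairColouring : Measure (List Bool → Bool) :=
  Measure.infinitePi fun _ => (PMF.uniformOfFintype Bool).toMeasure

instance : IsProbabilityMeasure fairColouring :=
  inferInstanceAs (IsProbabilityMeasure (Measure.infinitePi _))

lemma fairColouring_setOf_forall_ne (s : Finset (List Bool)) (c : Bool) :
    fairColouring {ω | ∀ l ∈ s, ω l ≠ c} = 2⁻¹ ^ s.card := by
  have hcoin : (PMF.uniformOfFintype Bool).toMeasure {c}ᶜ = 2⁻¹ := by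
    cases c <;> simp [PMF.toMeasure_apply_fintype]
  have hset : {ω : List Bool → Bool | ∀ l ∈ s, ω l ≠ c} = (s : Set _).pi fun _ => {c}ᶜ := rfl
  rw [hset, fairColouring, Measure.infinitePi_pi _ fun _ _ => .of_discrete, Finset.prod_const,
    hcoin]

lemma tendsto_fairColouring_setOf_forall_res_ne {S : Set (ℕ → Bool)} (hS : S.Infinite) (c : Bool) :
    Tendsto (fun j => fairColouring {ω | ∀ w ∈ S, ω (res w j) ≠ c}) atTop (𝓝 0) := by
  classical
  refine ENNReal.tendsto_nhds_zero.2 fun ε hε => ?_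
  obtain ⟨M, hM⟩ := ENNReal.exists_inv_two_pow_lt hε.ne'
  obtain ⟨F, hFS, hFcard⟩ := hS.exists_subset_card_eq M
  filter_upwards [eventually_injOn_res F.finite_toSet] with j hj
  calc fairColouring {ω | ∀ w ∈ S, ω (res w j) ≠ c}
      ≤ fairColouring {ω | ∀ l ∈ F.image (res · j), ω l ≠ c} :=
        measure_mono fun ω hω => Finset.forall_mem_image.2 fun w hw => hω w (hFS hw)
    _ = 2⁻¹ ^ M := by
        rw [fairColouring_setOf_forall_ne, Finset.card_image_of_injOn hj, hFcard]
    _ ≤ ε := hM.le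

lemma exists_measure_preimage_prodMk_le_prod {Ω X : Type*} [MeasurableSpace Ω] [MeasurableSpace X]
    (ν : Measure Ω) [IsProbabilityMeasure ν] (μ : Measure X) [SFinite μ] {S : Set (Ω × X)}
    (hS : MeasurableSet S) : ∃ ω, μ (Prod.mk ω ⁻¹' S) ≤ (ν.prod μ) S := by
  rw [Measure.prod_apply hS]
  exact exists_le_lintegral (measurable_measure_prodMk_left hS).aemeasurable

lemma infinite_inter_of_preperfect {α : Type*} [TopologicalSpace α] [T1Space α]
    {C U : Set α} (hC : Preperfect C) (hU : IsOpen U) (hne : (C ∩ U).Nonempty) :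
    (C ∩ U).Infinite := by
  obtain ⟨z, hz⟩ := hne
  rw [inter_comm] at hz ⊢
  exact .of_accPt (hC.open_inter hU z hz)

variable {X : Type*} [MeasurableSpace X]

/-- The pairs `(ω, x)` such that `K x` meets `V`, but no element of `K x ∩ V` has colour `e x`
when `w : ℕ → Bool` is given the colour under `ω` of the word `res w j` of its first `j` digits. -/
def missSet (K : X → Set (ℕ → Bool)) (V : Set (ℕ → Bool)) (e : X → Bool) (j : ℕ) :
    Set ((List Bool → Bool) × X) :=
  {a | (K a.2 ∩ V).Nonempty ∧ ∀ w ∈ K a.2 ∩ V, a.1 (res w j) ≠ e a.2}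

variable {K : X → Set (ℕ → Bool)} {V : Set (ℕ → Bool)} {e : X → Bool}

lemma measurableSet_missSet (hK : ∀ V, IsOpen V → MeasurableSet {x | (K x ∩ V).Nonempty})
    (hV : IsOpen V) (he : Measurable e) (j : ℕ) : MeasurableSet (missSet K V e j) := by
  have hset : missSet K V e j = {a | (K a.2 ∩ V).Nonempty} \ ⋃ l : List Bool,
      {a | (K a.2 ∩ (V ∩ {w | res w j = l})).Nonempty} ∩ {a | a.1 l = e a.2} := by
    ext ⟨ω, x⟩
    simp only [missSet, mem_ofPred_eq, Set.mem_sdiff, mem_iUnion, mem_inter_iff, Set.Nonempty]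
    grind
  rw [hset]
  refine .diff (measurable_snd (hK V hV)) (.iUnion fun l => .inter ?_ ?_)
  · exact measurable_snd (hK _ (hV.inter ((isLocallyConstant_res j).isOpen_fiber l)))
  · exact measurableSet_eq_fun (by fun_prop) (by fun_prop)

lemma tendsto_prod_missSet (μ : Measure X) [IsFiniteMeasure μ]
    (hK : ∀ V, IsOpen V → MeasurableSet {x | (K x ∩ V).Nonempty})
    (hK_perfect : ∀ᵐ x ∂μ, Preperfect (K x)) (hV : IsOpen V) (he : Measurable e) :
    Tendsto (fun j => (fairColouring.prod μ) (missSet K V e j)) atTop (𝓝 0) := by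
  have hmeas := fun j => measurableSet_missSet hK hV he j
  simp only [Measure.prod_apply_symm (hmeas _)]
  rw [← lintegral_zero (μ := μ)]
  refine tendsto_lintegral_of_dominated_convergence 1
    (fun j => measurable_measure_prodMk_right (hmeas j)) (fun j => .of_forall fun x => prob_le_one)
    (by simp) ?_
  filter_upwards [hK_perfect] with x hx
  by_cases hne : (K x ∩ V).Nonempty
  · simpa only [missSet, preimage_ofPred_eq, hne, true_and] using
      tendsto_fairColouring_setOf_forall_res_ne (infinite_inter_of_preperfect hx hV hne) (e x)
  · simp [missSet, hne]

theorem exists_continuous_measure_miss_le {ι : Type*} [Finite ι] (μ : Measure X) [IsFiniteMeasure μ]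
    (hK : ∀ V, IsOpen V → MeasurableSet {x | (K x ∩ V).Nonempty})
    (hK_perfect : ∀ᵐ x ∂μ, Preperfect (K x)) {U : ι → Set (ℕ → Bool)} (hU : ∀ i, IsOpen (U i))
    (he : Measurable e) {ε : ℝ≥0∞} (hε : ε ≠ 0) :
    ∃ L : C(ℕ → Bool, Bool),
      μ {x | ∃ i, (K x ∩ U i).Nonempty ∧ ∀ w ∈ K x ∩ U i, L w ≠ e x} ≤ ε := by
  have := Fintype.ofFinite ι
  have hlim : Tendsto (fun j => ∑ i, (fairColouring.prod μ) (missSet K (U i) e j)) atTop (𝓝 0) := by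
    simpa only [Finset.sum_const_zero] using
      tendsto_finsetSum _ fun i _ => tendsto_prod_missSet μ hK hK_perfect (hU i) he
  obtain ⟨j, hj⟩ := (ENNReal.tendsto_nhds_zero.1 hlim ε (pos_iff_ne_zero.2 hε)).exists
  obtain ⟨ω, hω⟩ := exists_measure_preimage_prodMk_le_prod fairColouring μ
    (.iUnion fun i => measurableSet_missSet hK (hU i) he j)
  refine ⟨⟨fun w => ω (res w j), ((isLocallyConstant_res j).comp ω).continuous⟩, ?_⟩
  calc _ = μ (Prod.mk ω ⁻¹' ⋃ i, missSet K (U i) e j) := by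
        congr 1; ext x; simp only [missSet, mem_preimage, mem_iUnion]; rfl
    _ ≤ (fairColouring.prod μ) (⋃ i, missSet K (U i) e j) := hω
    _ ≤ ∑ i, (fairColouring.prod μ) (missSet K (U i) e j) := measure_iUnion_fintype_le _ _
    _ ≤ ε := hj

lemma exists_seq_forall_fin {α : Type*} {R : ∀ n, (Fin n → α) → α → Prop}
    (h : ∀ n s, ∃ a, R n s a) : ∃ u : ℕ → α, ∀ n, R n (fun i => u i) (u n) := by
  choose F hF using h
  let u : ℕ → α := fun n => Nat.strongRec (fun n ih => F n fun i => ih i i.2) n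
  have hu : ∀ n, u n = F n fun i => u i := fun n => by
    simp only [u]
    rw [Nat.strongRec_eq]
  exact ⟨u, fun n => by rw [hu n]; exact hF n _⟩

lemma exists_mem_eventually_eq {K : Set (ℕ → Bool)} (hK : IsClosed K) (hne : K.Nonempty)
    {L : ℕ → C(ℕ → Bool, Bool)} {b : ℕ → Bool}
    (hstep : ∀ᶠ n in atTop, ∀ z ∈ K, ∃ w ∈ K, (∀ m < n, L m w = L m z) ∧ L n w = b n) :
    ∃ z ∈ K, ∀ᶠ n in atTop, L n z = b n := by
  obtain ⟨N, hN⟩ := eventually_atTop.1 hstep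
  let F : ℕ → Set (ℕ → Bool) := fun n => K ∩ ⋂ m ∈ Ico N (N + n), {z | L m z = b m}
  have hF_closed : ∀ n, IsClosed (F n) := fun n => hK.inter <|
    isClosed_biInter fun m _ => isClosed_eq (L m).continuous continuous_const
  have hF_anti : ∀ n, F (n + 1) ⊆ F n := fun n => inter_subset_inter_right _ <|
    biInter_subset_biInter_left (Ico_subset_Ico_right (by lia))
  have hF_nonempty : ∀ n, (F n).Nonempty := fun n => by
    induction n with
    | zero => simpa [F] using hne
    | succ n ih =>
      obtain ⟨z, hzK, hz⟩ := ih
      obtain ⟨w, hwK, hwz, hwn⟩ := hN (N + n) (by lia) z hzK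
      refine ⟨w, hwK, mem_iInter₂.2 fun m hm => ?_⟩
      rcases (Nat.lt_succ_iff.1 hm.2).eq_or_lt with rfl | hmn
      · exact hwn
      · exact (hwz m hmn).trans (mem_iInter₂.1 hz m ⟨hm.1, hmn⟩)
  obtain ⟨z, hz⟩ := IsCompact.nonempty_iInter_of_sequence_nonempty_isCompact_isClosed F hF_anti
    hF_nonempty (hF_closed 0).isCompact hF_closed
  rw [mem_iInter] at hz
  exact ⟨z, (hz 0).1, eventually_atTop.2 ⟨N, fun n hn =>
    mem_iInter₂.1 (hz (n + 1)).2 n ⟨hn, by lia⟩⟩⟩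

theorem exists_seq_continuous_ae_eventually_hit (μ : Measure X) [IsFiniteMeasure μ]
    (hK : ∀ V, IsOpen V → MeasurableSet {x | (K x ∩ V).Nonempty})
    (hK_perfect : ∀ᵐ x ∂μ, Preperfect (K x)) {b : X → ℕ → Bool} (hb : Measurable b) :
    ∃ L : ℕ → C(ℕ → Bool, Bool), ∀ᵐ x ∂μ, ∀ᶠ n in atTop,
      ∀ z ∈ K x, ∃ w ∈ K x, (∀ m < n, L m w = L m z) ∧ L n w = b x n := by
  have hstage : ∀ n (s : Fin n → C(ℕ → Bool, Bool)), ∃ L : C(ℕ → Bool, Bool),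
      μ {x | ∃ c : Fin n → Bool, (K x ∩ {z | ∀ m, s m z = c m}).Nonempty ∧
        ∀ w ∈ K x ∩ {z | ∀ m, s m z = c m}, L w ≠ b x n} ≤ 2⁻¹ ^ n := fun n s => by
    refine exists_continuous_measure_miss_le μ hK hK_perfect (fun c => ?_)
      ((measurable_pi_apply n).comp hb) (by simp)
    rw [ofPred_forall]
    exact isOpen_iInter_of_finite fun m => (isOpen_discrete {c m}).preimage (s m).continuous
  obtain ⟨L, hL⟩ := exists_seq_forall_fin hstage
  have hsum : ∑' n, (2⁻¹ : ℝ≥0∞) ^ n ≠ ∞ := by simp [ENNReal.tsum_geometric]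
  refine ⟨L, ?_⟩
  filter_upwards [ae_eventually_notMem (ne_top_of_le_ne_top hsum (ENNReal.tsum_le_tsum hL))]
    with x hx
  filter_upwards [hx] with n hn z hz
  by_contra! hmiss
  exact hn ⟨fun m => L m z, ⟨z, hz, fun _ => rfl⟩, fun w hw =>
    hmiss w hw.1 fun m hm => hw.2 ⟨m, hm⟩⟩

/- Repeating every digit of `e x` infinitely often in `b x` makes `e x` recoverable from any
sequence that agrees with `b x` at all but finitely many places. -/
theorem exists_measurable_ae_exists_mem_eq (μ : Measure X) [IsFiniteMeasure μ]
    (hK : ∀ V, IsOpen V → MeasurableSet {x | (K x ∩ V).Nonempty})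
    (hK_perfect : ∀ᵐ x ∂μ, Perfect (K x) ∧ (K x).Nonempty) {e : X → ℕ → Bool} (he : Measurable e) :
    ∃ H : (ℕ → Bool) → (ℕ → Bool), Measurable H ∧ ∀ᵐ x ∂μ, ∃ z ∈ K x, H z = e x := by
  classical
  obtain ⟨L, hL⟩ := exists_seq_continuous_ae_eventually_hit μ hK
    (hK_perfect.mono fun x hx => hx.1.acc) (b := fun x n => e x n.unpair.1) (by fun_prop)
  refine ⟨fun z i => decide (∀ᶠ n in atTop, L (Nat.pair i n) z = true), ?_, ?_⟩
  · refine measurable_pi_lambda _ fun i => (measurable_of_finite fun p : Prop => decide p).comp ?_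
    simp only [eventually_atTop]
    exact .exists fun N => .forall fun n => .forall fun _ => .eq
      (L (Nat.pair i n)).continuous.measurable measurable_const
  · filter_upwards [hL, hK_perfect] with x hx ⟨hperf, hne⟩
    obtain ⟨z, hzK, hz⟩ := exists_mem_eventually_eq hperf.closed hne hx
    refine ⟨z, hzK, funext fun i => ?_⟩
    have hzi : ∀ᶠ n in atTop, L (Nat.pair i n) z = e x i :=
      ((tendsto_atTop_mono (Nat.right_le_pair i) tendsto_id).eventually hz).mono fun n hn => by
        rwa [Nat.unpair_pair] at hn
    rw [Bool.eq_iff_iff, decide_eq_true_iff,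
      eventually_congr (hzi.mono fun n hn => by rw [hn]), eventually_const]

end RandomColouring

section InjectiveSelection

theorem exists_conull_measurable_section_injective_comp {X P Z : Type*} [MeasurableSpace X]
    [StandardBorelSpace X] [MeasurableSpace P] [StandardBorelSpace P] [MeasurableSpace Z]
    [MeasurableSpace.CountablySeparated Z] (μ : Measure X) [SFinite μ] {p : P → X}
    (hp : Measurable p) {q : P → Z} (hq : Measurable q)
    (hunc : ∀ᵐ x ∂μ, ¬(q '' (p ⁻¹' {x})).Countable) :
    ∃ X' : Set X, MeasurableSet X' ∧ μ X'ᶜ = 0 ∧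
      ∃ φ : X' → P, Measurable φ ∧ (∀ x, p (φ x) = x) ∧ Injective fun x => q (φ x) := by
  rcases isEmpty_or_nonempty P with hP | hP
  · refine ⟨∅, .empty, ?_, isEmptyElim, measurable_of_empty _, isEmptyElim,
      injective_of_subsingleton _⟩
    rw [← mem_ae_iff]
    filter_upwards [hunc] with x hx
    exact absurd (toFinite _).countable hx
  obtain ⟨e, he, he_inj⟩ := MeasurableSpace.measurable_injection_nat_bool_of_countablySeparated X
  obtain ⟨d, hd, hd_inj⟩ := MeasurableSpace.measurable_injection_nat_bool_of_countablySeparated Z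
  have hunc_d : ∀ᵐ x ∂μ, ¬((d ∘ q) '' (p ⁻¹' {x})).Countable := by
    filter_upwards [hunc] with x hx
    rw [image_comp]
    exact fun h => hx (countable_of_injective_of_countable_image hd_inj.injOn h)
  obtain ⟨K, hK, hK_ae⟩ := exists_measurable_perfect_subset_image μ hp (hd.comp hq) hunc_d
  obtain ⟨H, hH, hH_ae⟩ : ∃ H : (ℕ → Bool) → (ℕ → Bool), Measurable H ∧
      ∀ᵐ x ∂μ, ∃ z ∈ K x, H z = e x := by
    rw [← ae_toFinite (μ := μ)] at hK_ae ⊢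
    exact exists_measurable_ae_exists_mem_eq _ hK (hK_ae.mono fun x hx => ⟨hx.1, hx.2.1⟩) he
  let B : Set (X × P) := {a | p a.2 = a.1 ∧ H (d (q a.2)) = e a.1}
  have hB : MeasurableSet B :=
    (measurableSet_eq_fun (by fun_prop) (by fun_prop)).inter
      (measurableSet_eq_fun (by fun_prop) (by fun_prop))
  obtain ⟨s, hs, hsB⟩ := exists_measurable_ae_uniformization μ hB
  have hsB' : ∀ᵐ x ∂μ, (x, s x) ∈ B := by
    filter_upwards [hK_ae, hH_ae, hsB] with x ⟨_, _, hKx⟩ ⟨z, hz, hzx⟩ hx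
    obtain ⟨a, ha, rfl⟩ := hKx hz
    exact hx ⟨a, ha, hzx⟩
  refine ⟨{x | (x, s x) ∈ B}, (measurable_id.prodMk hs) hB, hsB', fun x => s x,
    hs.comp measurable_subtype_coe, fun x => x.2.1, fun x y hxy => Subtype.ext (he_inj ?_)⟩
  rw [← x.2.2, ← y.2.2]
  exact congrArg (H ∘ d) hxy

theorem statement2_general {X Y Z : Type*} [MeasurableSpace X] [StandardBorelSpace X]
    [MeasurableSpace Y] [StandardBorelSpace Y] [MeasurableSpace Z]
    [MeasurableSpace.CountablySeparated Z] (μ : Measure X) [SFinite μ]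
    {f : X × Y → Z} (hf : Measurable f) {A : Set (X × Y)} (hA : MeasurableSet A)
    (hfib : ∀ᵐ x ∂μ, ¬ ((fun y => f (x, y)) '' {y : Y | (x, y) ∈ A}).Countable) :
    ∃ X' : Set X, MeasurableSet X' ∧ μ X'ᶜ = 0 ∧
      ∃ φ : X' → Y, Measurable φ ∧ (∀ x : X', ((x : X), φ x) ∈ A) ∧
        Injective (fun x : X' => f ((x : X), φ x)) := by
  have := hA.standardBorel
  have hunc : ∀ᵐ x ∂μ, ¬((fun a : A => f a) '' ((fun a : A => a.1.1) ⁻¹' {x})).Countable := by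
    filter_upwards [hfib] with x hx hcount
    refine hx (hcount.mono ?_)
    rintro _ ⟨y, hy, rfl⟩
    exact ⟨⟨(x, y), hy⟩, rfl, rfl⟩
  obtain ⟨X', hX', hμ, φ, hφ, hφ_section, hinj⟩ :=
    exists_conull_measurable_section_injective_comp μ (by fun_prop) (by fun_prop) hunc
  have hφ_eq (x : X') : ((x : X), (φ x).1.2) = φ x := Prod.ext (hφ_section x).symm rfl
  refine ⟨X', hX', hμ, fun x => (φ x).1.2, by fun_prop, fun x => ?_, ?_⟩
  · rw [hφ_eq]
    exact (φ x).2
  · simpa only [hφ_eq] using hinj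

end InjectiveSelection

/-- Proposition 2.3: Borel selection `φ` with graph in `A` such that
`x ↦ f(x, φ(x))` is injective. -/
theorem statement2 {X Y Z : Type} [MeasurableSpace X] [StandardBorelSpace X]
    [MeasurableSpace Y] [StandardBorelSpace Y]
    [MeasurableSpace Z] [StandardBorelSpace Z]
    (μ : Measure X) [IsProbabilityMeasure μ]
    (f : X × Y → Z) (hf : Measurable f)
    (A : Set (X × Y)) (hA : MeasurableSet A)
    (hfib : ∀ x : X, ¬ ((fun y => f (x, y)) '' {y : Y | (x, y) ∈ A}).Countable) :
    ∃ X' : Set X, MeasurableSet X' ∧ μ X'ᶜ = 0 ∧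
      ∃ φ : X' → Y, Measurable φ ∧ (∀ x : X', ((x : X), φ x) ∈ A) ∧
        Function.Injective (fun x : X' => f ((x : X), φ x)) :=
  statement2_general μ hf hA (.of_forall hfib)
end

section
/- Let G ↷ (X, μ) be a pmp action of a countable group, and suppose x ↦ π_x is an ergodic decomposition map for μ with τ = π_*μ. Let α = {A_i : i ∈ ℕ} be a countable Borel partition of X and define θ^α : X → ℕ^G by θ^α(x)(g) = i if and only if g⁻¹·x ∈ A_i, where G acts on ℕ^G by (g·y)(t) = y(g⁻¹t). If the map ν ↦ θ^α_*(ν) is injective on a τ-conull set of ergodic measures, then every G-invariant Borel set agrees modulo a μ-null set with a set in σ_G(α). -/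
open MeasureTheory Set Function
open scoped ENNReal symmDiff

/-!
Let `S` be a `G`-invariant σ-algebra making `θ` measurable. Since `S` is invariant, conditioning on
`S` commutes with the action, so it preserves a.e. invariance; equivalently, the orthogonal
projections of `L²(μ)` onto the `S`-measurable and onto the invariant functions commute.
Hence for `A ∈ S` the function `x ↦ π_x(A)`, which is the conditional expectation of `1_A` on the
invariant sets, is a.e. equal to an `S`-measurable function. Letting `A` run through `θ⁻¹(K)` for
`K` in a countable algebra generating the target of `θ`, the law `θ_*(π_x)` is an `S`-measurable
function of `x`, up to a null set. By injectivity this law determines `π_x`, and an invariant set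
`B` agrees a.e. with `{x | π_x(B) = 1}`. The two images of this set and of its complement in the
space of laws are therefore disjoint analytic sets, and Lusin separation provides a Borel set of
laws whose `S`-measurable preimage is a.e. equal to `B`.
-/

section ConditionalExpectation

variable {X : Type*} {m S I mX : MeasurableSpace X} {μ : Measure X} [IsFiniteMeasure μ]

lemma integral_mul_sub_condExp_eq_zero (hm : m ≤ mX) {u v : X → ℝ}
    (hu : AEStronglyMeasurable[m] u μ) (hu₂ : MemLp u 2 μ) (hv₂ : MemLp v 2 μ) :
    ∫ x, u x * (v x - (μ[v | m]) x) ∂μ = 0 := by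
  have huv : Integrable (fun x => u x * v x) μ := hu₂.integrable_mul hv₂
  have huc : Integrable (fun x => u x * (μ[v | m]) x) μ :=
    hu₂.integrable_mul (hv₂.condExp one_le_two)
  have hpull : ∫ x, u x * (μ[v | m]) x ∂μ = ∫ x, u x * v x ∂μ :=
    calc ∫ x, u x * (μ[v | m]) x ∂μ = ∫ x, (μ[u * v | m]) x ∂μ :=
          integral_congr_ae (condExp_mul_of_aestronglyMeasurable_left hu huv
            (hv₂.integrable one_le_two)).symm
      _ = ∫ x, u x * v x ∂μ := integral_condExp hm
  simp only [mul_sub]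
  rw [integral_sub huv huc, hpull, sub_self]

lemma condExp_condExp_ae_eq_of_aestronglyMeasurable (hS : S ≤ mX) (hI : I ≤ mX) {f : X → ℝ}
    (hf : AEStronglyMeasurable[S] f μ) (hf₂ : MemLp f 2 μ)
    (hI' : AEStronglyMeasurable[I] (μ[μ[f | I] | S]) μ) :
    μ[μ[f | I] | S] =ᵐ[μ] μ[f | I] := by
  set p := μ[f | I]
  set q := μ[p | S]
  have hp₂ : MemLp p 2 μ := hf₂.condExp one_le_two
  have hq₂ : MemLp q 2 μ := hp₂.condExp one_le_two
  have hpq₂ : MemLp (p - q) 2 μ := hp₂.sub hq₂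
  have hpqI : AEStronglyMeasurable[I] (p - q) μ :=
    stronglyMeasurable_condExp.aestronglyMeasurable.sub hI'
  have hpq_perp : ∫ x, (p - q) x * (f x - p x) ∂μ = 0 :=
    integral_mul_sub_condExp_eq_zero hI hpqI hpq₂ hf₂
  have hf_perp : ∫ x, f x * (p x - q x) ∂μ = 0 :=
    integral_mul_sub_condExp_eq_zero hS hf hf₂ hp₂
  have hq_perp : ∫ x, q x * (p x - q x) ∂μ = 0 :=
    integral_mul_sub_condExp_eq_zero hS stronglyMeasurable_condExp.aestronglyMeasurable hq₂ hp₂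
  have hsq : ∫ x, (p x - q x) ^ 2 ∂μ = 0 :=
    calc ∫ x, (p x - q x) ^ 2 ∂μ
        = ∫ x, f x * (p x - q x) - (p - q) x * (f x - p x) - q x * (p x - q x) ∂μ :=
          integral_congr_ae (.of_forall fun x => by simp only [Pi.sub_apply]; ring)
      _ = 0 := by
          have hf_int : Integrable (fun x => f x * (p x - q x)) μ := hf₂.integrable_mul hpq₂
          have hpq_int : Integrable (fun x => (p - q) x * (f x - p x)) μ :=
            hpq₂.integrable_mul (hf₂.sub hp₂)
          have hq_int : Integrable (fun x => q x * (p x - q x)) μ := hq₂.integrable_mul hpq₂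
          have hsub_int : Integrable (fun x => f x * (p x - q x) - (p - q) x * (f x - p x)) μ :=
            hf_int.sub hpq_int
          rw [integral_sub hsub_int hq_int, integral_sub hf_int hpq_int, hf_perp,
            hpq_perp, hq_perp, sub_zero, sub_zero]
  have hsq_ae := (integral_eq_zero_iff_of_nonneg (fun x => sq_nonneg _) hpq₂.integrable_sq).1 hsq
  filter_upwards [hsq_ae] with x hx
  exact (sub_eq_zero.1 (pow_eq_zero_iff two_ne_zero |>.1 hx)).symm

lemma condExp_comp_measurePreserving {Y E : Type*} {n mY : MeasurableSpace Y} (hn : n ≤ mY)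
    [NormedAddCommGroup E] [NormedSpace ℝ E] [CompleteSpace E] {ν : Measure Y}
    {T : X → Y} (hT : MeasurePreserving T μ ν) {f : Y → E} (hf : Integrable f ν) :
    (ν[f | n]) ∘ T =ᵐ[μ] μ[f ∘ T | n.comap T] := by
  have : IsFiniteMeasure ν := hT.map_eq ▸ inferInstance
  have setIntegral_comp : ∀ {g : Y → E}, Integrable g ν → ∀ t, MeasurableSet[n] t →
      ∫ x in T ⁻¹' t, g (T x) ∂μ = ∫ y in t, g y ∂ν := fun {g} hg t ht => by
    rw [← hT.map_eq, setIntegral_map (hn t ht) (hT.map_eq.symm ▸ hg.aestronglyMeasurable)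
      hT.aemeasurable]
  refine ae_eq_condExp_of_forall_setIntegral_eq
    ((MeasurableSpace.comap_mono hn).trans hT.measurable.comap_le)
    (hT.integrable_comp_of_integrable hf)
    (fun _ _ _ => (hT.integrable_comp_of_integrable integrable_condExp).integrableOn) ?_
    (stronglyMeasurable_condExp.comp_measurable (comap_measurable T)).aestronglyMeasurable
  rintro _ ⟨t, ht, rfl⟩ -
  simp only [comp_apply]
  rw [setIntegral_comp integrable_condExp t ht, setIntegral_comp hf t ht,
    setIntegral_condExp hn hf ht]

end ConditionalExpectation

section CountablyGenerated

lemma exists_seq_measureReal_determining (Y : Type*) [MeasurableSpace Y]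
    [MeasurableSpace.CountablyGenerated Y] :
    ∃ K : ℕ → Set Y, (∀ n, MeasurableSet (K n)) ∧
      ∀ (ν ν' : Measure Y) [IsFiniteMeasure ν] [IsFiniteMeasure ν'],
        (∀ n, ν.real (K n) = ν'.real (K n)) → ν = ν' := by
  let 𝒜 := generateSetAlgebra (MeasurableSpace.countableGeneratingSet Y)
  have h𝒜 : IsSetAlgebra 𝒜 := isSetAlgebra_generateSetAlgebra
  have hgen : MeasurableSpace.generateFrom 𝒜 = ‹MeasurableSpace Y› := by
    rw [generateFrom_generateSetAlgebra_eq, MeasurableSpace.generateFrom_countableGeneratingSet]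
  have h𝒜_countable : 𝒜.Countable :=
    countable_generateSetAlgebra MeasurableSpace.countable_countableGeneratingSet
  obtain ⟨K, hK⟩ := h𝒜_countable.exists_eq_range ⟨∅, h𝒜.empty_mem⟩
  refine ⟨K, fun n => ?_, fun ν ν' _ _ hνν' => ?_⟩
  · rw [← hgen]
    exact MeasurableSpace.measurableSet_generateFrom (hK ▸ mem_range_self n)
  · have agree : ∀ s ∈ 𝒜, ν s = ν' s := by
      intro s hs
      obtain ⟨n, rfl⟩ : s ∈ range K := hK ▸ hs
      exact (measureReal_eq_measureReal_iff).1 (hνν' n)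
    exact ext_of_generate_finite 𝒜 hgen.symm (fun s hs t ht _ => h𝒜.inter_mem hs ht) agree
      (agree univ h𝒜.univ_mem)

lemma measurableSet_setOf_measure_eq {X Y : Type*} [MeasurableSpace X] [MeasurableSpace Y]
    [MeasurableSpace.CountablyGenerated Y] {κ : X → Measure Y} (hκ : Measurable κ)
    [∀ x, IsFiniteMeasure (κ x)] (ν : Measure Y) [IsFiniteMeasure ν] :
    MeasurableSet {x | κ x = ν} := by
  obtain ⟨K, hK, hdet⟩ := exists_seq_measureReal_determining Y
  have hset : {x | κ x = ν} = ⋂ n, {x | (κ x).real (K n) = ν.real (K n)} := by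
    ext x
    simp only [mem_ofPred_eq, mem_iInter]
    exact ⟨fun h n => by rw [h], hdet _ _⟩
  rw [hset]
  exact .iInter fun n => measurableSet_eq_fun
    ((Measure.measurable_coe (hK n)).comp hκ).ennreal_toReal measurable_const

end CountablyGenerated

lemma exists_measurableSet_ae_eq_preimage {X Z : Type*} [MeasurableSpace X] [StandardBorelSpace X]
    [TopologicalSpace Z] [T2Space Z] [SecondCountableTopology Z] [MeasurableSpace Z]
    [OpensMeasurableSpace Z] {μ : Measure X} {F : X → Z} (hF : Measurable F)
    {D : Set X} (hD : MeasurableSet D) {s : Set X} (hs : ∀ᵐ x ∂μ, x ∈ s)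
    (hsep : ∀ x ∈ s, ∀ y ∈ s, F x = F y → x ∈ D → y ∈ D) :
    ∃ T, MeasurableSet T ∧ D =ᵐ[μ] F ⁻¹' T := by
  obtain ⟨N, hsN, hN, hμN⟩ := exists_measurable_superset_of_null (mem_ae_iff.1 hs)
  have hNs : ∀ x ∉ N, x ∈ s := fun x hx => not_not.1 fun h => hx (hsN h)
  have hdisj : Disjoint (F '' (D \ N)) (F '' (Dᶜ \ N)) := by
    rw [Set.disjoint_left]
    rintro _ ⟨x, hx, rfl⟩ ⟨y, hy, hyx⟩
    exact hy.1 (hsep x (hNs x hx.2) y (hNs y hy.2) hyx.symm hx.1)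
  obtain ⟨T, hDT, hDcT, hT⟩ := ((hD.diff hN).analyticSet_image hF).measurablySeparable
    ((hD.compl.diff hN).analyticSet_image hF) hdisj
  refine ⟨T, hT, Filter.eventuallyEq_set.2 ?_⟩
  filter_upwards [measure_eq_zero_iff_ae_notMem.1 hμN] with x hxN
  refine ⟨fun hxD => hDT (mem_image_of_mem F ⟨hxD, hxN⟩), fun hxT => ?_⟩
  by_contra hxD
  exact Set.disjoint_left.1 hDcT (mem_image_of_mem F ⟨hxD, hxN⟩) hxT

section InvariantSets

variable {G X : Type*} [Group G] [MulAction G X]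

lemma IsPmp.measurableConstSMul [MeasurableSpace X] {μ : Measure X} (hμ : IsPmp G μ) :
    MeasurableConstSMul G X :=
  ⟨fun g => (hμ g).measurable⟩

lemma InvariantAlg.comap_smul_eq {S : MeasurableSpace X} (hS : InvariantAlg G S) (g : G) :
    S.comap (g • ·) = S := by
  refine le_antisymm ?_ fun A hA => ⟨(g⁻¹ • ·) ⁻¹' A, hS g⁻¹ A hA, ?_⟩
  · rintro _ ⟨A, hA, rfl⟩
    exact hS g A hA
  · ext x
    simp only [mem_preimage, inv_smul_smul]

variable {S : MeasurableSpace X} [mX : MeasurableSpace X]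

lemma measurableSet_invSigma_iff {J : Set X} :
    MeasurableSet[invSigma G X] J ↔ MeasurableSet J ∧ ∀ g : G, (fun x => g • x) ⁻¹' J = J := by
  refine ⟨fun hJ => ?_, fun hJ => MeasurableSpace.measurableSet_generateFrom hJ⟩
  induction J, hJ using MeasurableSpace.generateFrom_induction with
  | hC _ hJ _ => exact hJ
  | empty => exact ⟨.empty, fun g => preimage_empty⟩
  | compl _ _ h => exact ⟨h.1.compl, fun g => by rw [preimage_compl, h.2]⟩
  | iUnion s _ h =>
    exact ⟨.iUnion fun n => (h n).1,
      fun g => by rw [preimage_iUnion, iUnion_congr fun n => (h n).2 g]⟩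

lemma invSigma_le : invSigma G X ≤ mX :=
  fun _ hJ => (measurableSet_invSigma_iff.1 hJ).1

lemma measurable_invSigma_iff {E : Type*} [MeasurableSpace E] [MeasurableSingletonClass E]
    {f : X → E} :
    Measurable[invSigma G X] f ↔ Measurable f ∧ ∀ (g : G) (x : X), f (g • x) = f x := by
  refine ⟨fun hf => ⟨hf.mono invSigma_le le_rfl, fun g x => ?_⟩, fun hf s hs => ?_⟩
  · have hfib := (measurableSet_invSigma_iff.1 (hf (measurableSet_singleton (f x)))).2 g
    exact (Set.ext_iff.1 hfib x).2 rfl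
  · refine measurableSet_invSigma_iff.2 ⟨hf.1 hs, fun g => ?_⟩
    ext x
    simp only [mem_preimage, hf.2]

lemma exists_measurable_smul_invariant_ae_eq [Countable G] [MeasurableConstSMul G X]
    {E : Type*} [MeasurableSpace E] [MeasurableEq E] [Nonempty E] {μ : Measure X} {f : X → E}
    (hf : Measurable f) (hinv : ∀ g : G, (fun x => f (g • x)) =ᵐ[μ] f) :
    ∃ f' : X → E, Measurable f' ∧ (∀ (g : G) (x : X), f' (g • x) = f' x) ∧ f =ᵐ[μ] f' := by
  classical
  let T : Set X := {x | ∀ g : G, f (g • x) = f x}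
  have hT : MeasurableSet T := by
    simp only [T, ofPred_forall]
    exact .iInter fun g => measurableSet_eq_fun (hf.comp (measurable_const_smul g)) hf
  have smul_mem : ∀ (g : G) (x : X), x ∈ T → g • x ∈ T := fun g x hx h => by
    rw [smul_smul, hx, hx]
  have smul_mem_iff : ∀ (g : G) (x : X), g • x ∈ T ↔ x ∈ T := fun g x =>
    ⟨fun hx => inv_smul_smul g x ▸ smul_mem g⁻¹ _ hx, smul_mem g x⟩
  refine ⟨T.piecewise f fun _ => Classical.arbitrary E, hf.piecewise hT measurable_const, ?_, ?_⟩
  · intro g x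
    by_cases hx : x ∈ T
    · simpa only [piecewise, smul_mem_iff, hx, if_true] using hx g
    · simp only [piecewise, smul_mem_iff, hx, if_false]
  · filter_upwards [ae_all_iff.2 hinv] with x hx
    exact (piecewise_eq_of_mem T f _ hx).symm

lemma aestronglyMeasurable_invSigma_condExp [Countable G] (hS : S ≤ mX)
    (hSinv : InvariantAlg G S) {μ : Measure X} [IsFiniteMeasure μ] (hμ : IsPmp G μ) {p : X → ℝ}
    (hp : Integrable p μ) (hpinv : ∀ g : G, (fun x => p (g • x)) =ᵐ[μ] p) :
    AEStronglyMeasurable[invSigma G X] (μ[p | S]) μ := by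
  have := hμ.measurableConstSMul
  have hinv : ∀ g : G, (fun x => (μ[p | S]) (g • x)) =ᵐ[μ] μ[p | S] := fun g => by
    have hcomp := condExp_comp_measurePreserving hS (hμ g) hp
    rw [hSinv.comap_smul_eq g] at hcomp
    exact hcomp.trans (condExp_congr_ae (hpinv g))
  obtain ⟨q, hq, hqinv, hpq⟩ := exists_measurable_smul_invariant_ae_eq
    (stronglyMeasurable_condExp.mono hS).measurable hinv
  exact ⟨q, (measurable_invSigma_iff.2 ⟨hq, hqinv⟩).stronglyMeasurable, hpq⟩

lemma aestronglyMeasurable_condExp_invSigma [Countable G] (hS : S ≤ mX)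
    (hSinv : InvariantAlg G S) {μ : Measure X} [IsFiniteMeasure μ] (hμ : IsPmp G μ) {f : X → ℝ}
    (hf : AEStronglyMeasurable[S] f μ) (hf₂ : MemLp f 2 μ) :
    AEStronglyMeasurable[S] (μ[f | invSigma G X]) μ := by
  have hinv : ∀ (g : G) (x : X), (μ[f | invSigma G X]) (g • x) = (μ[f | invSigma G X]) x :=
    (measurable_invSigma_iff.1 stronglyMeasurable_condExp.measurable).2
  have hcomm := condExp_condExp_ae_eq_of_aestronglyMeasurable hS invSigma_le hf hf₂
    (aestronglyMeasurable_invSigma_condExp hS hSinv hμ integrable_condExp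
      fun g => .of_forall (hinv g))
  exact stronglyMeasurable_condExp.aestronglyMeasurable.congr hcomm

end InvariantSets

namespace IsErgDecomp

variable {G X : Type*} [Group G] {S : MeasurableSpace X} [mX : MeasurableSpace X] [MulAction G X]
  {μ : Measure X} {π : X → Measure X}

lemma isProbabilityMeasure (hπ : IsErgDecomp G μ π) (x : X) : IsProbabilityMeasure (π x) :=
  (hπ.2.1 x).1

lemma measurable_apply (hπ : IsErgDecomp G μ π) {A : Set X} (hA : MeasurableSet A) :
    Measurable fun x => π x A :=
  (Measure.measurable_coe hA).comp hπ.1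

lemma ae_eq [MeasurableSpace.CountablyGenerated X] (hπ : IsErgDecomp G μ π) (x : X) :
    ∀ᵐ y ∂(π x), π y = π x := by
  have := hπ.isProbabilityMeasure
  obtain ⟨hprob, hpmp, herg⟩ := hπ.2.1 x
  exact (mem_ae_iff_prob_eq_one (measurableSet_setOf_measure_eq hπ.1 (π x))).2
    (hπ.2.2.2.1 (π x) hprob hpmp herg)

lemma ae_eq_setOf_apply_eq_one [MeasurableSpace.CountablyGenerated X] (hπ : IsErgDecomp G μ π)
    {J : Set X} (hJ : MeasurableSet[invSigma G X] J) : J =ᵐ[μ] {x | π x J = 1} := by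
  obtain ⟨hJm, hJinv⟩ := measurableSet_invSigma_iff.1 hJ
  have hD : MeasurableSet {x | π x J = 1} := hπ.measurable_apply hJm (measurableSet_singleton 1)
  rw [← measure_symmDiff_eq_zero_iff, hπ.2.2.2.2 _ (hJm.symmDiff hD)]
  refine lintegral_eq_zero_of_ae_eq_zero (.of_forall fun x => ?_)
  have := hπ.isProbabilityMeasure x
  refine measure_symmDiff_eq_zero_iff.2 (Filter.eventuallyEq_set.2 ?_)
  rcases (hπ.2.1 x).2.2 J hJm hJinv with hJ₀ | hJ₁
  · filter_upwards [hπ.ae_eq x, measure_eq_zero_iff_ae_notMem.1 hJ₀] with y hy hyJ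
    simp only [hyJ, hy, hJ₀, zero_ne_one]
  · filter_upwards [hπ.ae_eq x, (mem_ae_iff_prob_eq_one hJm).2 hJ₁] with y hy hyJ
    exact iff_of_true hyJ (hy.symm ▸ hJ₁)

lemma apply_inter_eq_indicator (hπ : IsErgDecomp G μ π) {J : Set X}
    (hJ : MeasurableSet[invSigma G X] J) (A : Set X) (x : X) :
    π x (A ∩ J) = {y | π y J = 1}.indicator (fun y => π y A) x := by
  obtain ⟨hJm, hJinv⟩ := measurableSet_invSigma_iff.1 hJ
  have := hπ.isProbabilityMeasure x
  by_cases hJ₁ : π x J = 1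
  · have hx : x ∈ {y | π y J = 1} := hJ₁
    rw [indicator_of_mem hx]
    exact measure_inter_conull ((prob_compl_eq_zero_iff hJm).2 hJ₁)
  · have hx : x ∉ {y | π y J = 1} := hJ₁
    rw [indicator_of_notMem hx]
    exact measure_mono_null inter_subset_right
      (((hπ.2.1 x).2.2 J hJm hJinv).resolve_right hJ₁)

lemma setLIntegral_apply [MeasurableSpace.CountablyGenerated X] (hπ : IsErgDecomp G μ π)
    {A J : Set X} (hA : MeasurableSet A) (hJ : MeasurableSet[invSigma G X] J) :
    ∫⁻ x in J, π x A ∂μ = μ (A ∩ J) := by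
  have hJm : MeasurableSet J := invSigma_le J hJ
  have hD : MeasurableSet {x | π x J = 1} := hπ.measurable_apply hJm (measurableSet_singleton 1)
  calc ∫⁻ x in J, π x A ∂μ = ∫⁻ x in {y | π y J = 1}, π x A ∂μ := by
        rw [Measure.restrict_congr_set (hπ.ae_eq_setOf_apply_eq_one hJ)]
    _ = ∫⁻ x, π x (A ∩ J) ∂μ := by
        rw [← lintegral_indicator hD]
        exact lintegral_congr fun x => (hπ.apply_inter_eq_indicator hJ A x).symm
    _ = μ (A ∩ J) := (hπ.2.2.2.2 _ (hA.inter hJm)).symm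

lemma measurable_real (hπ : IsErgDecomp G μ π) {A : Set X} (hA : MeasurableSet A) :
    Measurable fun x => (π x).real A :=
  (hπ.measurable_apply hA).ennreal_toReal

lemma real_ae_eq_condExp [MeasurableSpace.CountablyGenerated X] [IsFiniteMeasure μ]
    (hπ : IsErgDecomp G μ π) {A : Set X} (hA : MeasurableSet A) :
    (fun x => (π x).real A) =ᵐ[μ] μ[A.indicator fun _ => (1 : ℝ) | invSigma G X] := by
  have := hπ.isProbabilityMeasure
  have hint : Integrable (fun x => (π x).real A) μ :=
    .of_bound (hπ.measurable_real hA).aestronglyMeasurable 1 <| .of_forall fun x => by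
      rw [Real.norm_of_nonneg measureReal_nonneg]
      exact measureReal_le_one
  have hinv : Measurable[invSigma G X] fun x => (π x).real A :=
    measurable_invSigma_iff.2 ⟨hπ.measurable_real hA, fun g x => by rw [hπ.2.2.1]⟩
  refine ae_eq_condExp_of_forall_setIntegral_eq invSigma_le ((integrable_const 1).indicator hA)
    (fun _ _ _ => hint.integrableOn) (fun J hJ _ => ?_)
    hinv.stronglyMeasurable.aestronglyMeasurable
  calc ∫ x in J, (π x).real A ∂μ = (∫⁻ x in J, π x A ∂μ).toReal :=
        integral_toReal (hπ.measurable_apply hA).aemeasurable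
          (.of_forall fun x => measure_lt_top (π x) A)
    _ = μ.real (A ∩ J) := by rw [hπ.setLIntegral_apply hA hJ, measureReal_def]
    _ = ∫ x in J, A.indicator (fun _ => (1 : ℝ)) x ∂μ := by
        rw [integral_indicator_const _ hA, measureReal_restrict_apply hA, smul_eq_mul, mul_one]

lemma aestronglyMeasurable_real [MeasurableSpace.CountablyGenerated X] [Countable G]
    [IsFiniteMeasure μ] (hπ : IsErgDecomp G μ π) (hμ : IsPmp G μ)
    (hS : S ≤ mX) (hSinv : InvariantAlg G S) {A : Set X} (hA : MeasurableSet[S] A) :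
    AEStronglyMeasurable[S] (fun x => (π x).real A) μ := by
  have hA₂ : MemLp (A.indicator fun _ => (1 : ℝ)) 2 μ := (memLp_const 1).indicator (hS A hA)
  have hAS : StronglyMeasurable[S] (A.indicator fun _ => (1 : ℝ)) :=
    stronglyMeasurable_const.indicator hA
  exact (aestronglyMeasurable_condExp_invSigma hS hSinv hμ hAS.aestronglyMeasurable hA₂).congr
    (hπ.real_ae_eq_condExp (hS A hA)).symm

end IsErgDecomp

section SigmaG

variable {G X : Type*} [Group G] [MulAction G X]

lemma sigmaG_le [mX : MeasurableSpace X] [MeasurableConstSMul G X] {ξ : Set (Set X)}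
    (hξ : ∀ A ∈ ξ, MeasurableSet A) : sigmaG G ξ ≤ mX := by
  refine MeasurableSpace.generateFrom_le ?_
  rintro _ ⟨g, A, hA, rfl⟩
  exact measurable_const_smul g (hξ A hA)

lemma invariantAlg_sigmaG (ξ : Set (Set X)) : InvariantAlg G (sigmaG G ξ) := by
  intro g
  have hg : Measurable[sigmaG G ξ, sigmaG G ξ] fun x : X => g • x := by
    refine @measurable_generateFrom X X (sigmaG G ξ) _ _ ?_
    rintro _ ⟨h, A, hA, rfl⟩
    refine MeasurableSpace.measurableSet_generateFrom ⟨h * g, A, hA, ?_⟩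
    ext x
    simp only [mem_preimage, mul_smul]
  exact fun A hA => hg hA

lemma measurable_sigmaG_itinerary {α : ℕ → Set X} (hα : Pairwise (Disjoint on α))
    {θ : X → G → ℕ} (hθ : ∀ (x : X) (g : G), g⁻¹ • x ∈ α (θ x g)) :
    Measurable[sigmaG G (range α)] θ := by
  refine @measurable_pi_lambda X G (fun _ => ℕ) (sigmaG G (range α)) _ θ fun g => ?_
  refine @measurable_to_countable' ℕ X _ _ (sigmaG G (range α)) _ fun i => ?_
  refine MeasurableSpace.measurableSet_generateFrom ⟨g⁻¹, α i, mem_range_self i, ?_⟩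
  ext x
  refine ⟨?_, fun hx => hα.eq (not_disjoint_iff.2 ⟨_, hθ x g, hx⟩)⟩
  rintro rfl
  exact hθ x g

end SigmaG

theorem statement4_general {G X Y : Type*} [Group G] [Countable G]
    {S : MeasurableSpace X} [mX : MeasurableSpace X] [StandardBorelSpace X] [MulAction G X]
    [MeasurableSpace Y] [MeasurableSpace.CountablyGenerated Y]
    (hS : S ≤ mX) (hSinv : InvariantAlg G S)
    {μ : Measure X} [IsFiniteMeasure μ] (hpmp : IsPmp G μ)
    {π : X → Measure X} (hπ : IsErgDecomp G μ π)
    {θ : X → Y} (hθ : Measurable[S] θ)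
    {E : Set (Measure X)} (hE : (μ.map π) Eᶜ = 0)
    (hinj : Set.InjOn (fun ν : Measure X => Measure.map θ ν) E)
    {B : Set X} (hB : MeasurableSet B) (hBinv : ∀ g : G, (fun x => g • x) ⁻¹' B = B) :
    ∃ C, MeasurableSet[S] C ∧ μ (B ∆ C) = 0 := by
  have := hπ.isProbabilityMeasure
  have hθ' : Measurable θ := hθ.mono hS le_rfl
  obtain ⟨K, hK, hdet⟩ := exists_seq_measureReal_determining Y
  let law : X → ℕ → ℝ := fun x n => (π x).real (θ ⁻¹' K n)
  have hlaw : Measurable law := measurable_pi_lambda _ fun n => hπ.measurable_real (hθ' (hK n))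
  choose lawS hlawS hlaw_eq using fun n => hπ.aestronglyMeasurable_real hpmp hS hSinv (hθ (hK n))
  have law_inj : ∀ x y, π x ∈ E → π y ∈ E → law x = law y → π x = π y := by
    intro x y hx hy hxy
    refine hinj hx hy (hdet _ _ fun n => ?_)
    simpa only [map_measureReal_apply hθ' (hK n)] using congrFun hxy n
  have hE' : ∀ᵐ x ∂μ, x ∈ π ⁻¹' E := ae_of_ae_map hπ.1.aemeasurable hE
  have hsep : ∀ x ∈ π ⁻¹' E, ∀ y ∈ π ⁻¹' E, law x = law y → π x B = 1 → π y B = 1 :=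
    fun x hx y hy hxy hxB => law_inj x y hx hy hxy ▸ hxB
  have hD : MeasurableSet {x | π x B = 1} := hπ.measurable_apply hB (measurableSet_singleton 1)
  obtain ⟨T, hT, hDT⟩ := exists_measurableSet_ae_eq_preimage hlaw hD hE' hsep
  refine ⟨(fun x n => lawS n x) ⁻¹' T, ?_, measure_symmDiff_eq_zero_iff.2 ?_⟩
  · exact @measurable_pi_lambda X ℕ (fun _ => ℝ) S _ _ (fun n => (hlawS n).measurable) T hT
  · have hlaw_ae : law =ᵐ[μ] fun x n => lawS n x := by
      filter_upwards [ae_all_iff.2 hlaw_eq] with x hx using funext hx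
    exact ((hπ.ae_eq_setOf_apply_eq_one (measurableSet_invSigma_iff.2 ⟨hB, hBinv⟩)).trans
      hDT).trans (hlaw_ae.preimage T)

/-- Lemma 3.7: if the itinerary pushforwards `ν ↦ θ^α_* ν` are injective
on a conull set of ergodic components, then every `G`-invariant Borel set agrees modulo
`μ`-null sets with a set in `σ_G(α)`. -/
theorem statement4 {G X : Type*} [Group G] [Countable G]
    [mX : MeasurableSpace X] [StandardBorelSpace X] [MulAction G X]
    (μ : Measure X) [IsProbabilityMeasure μ] (hpmp : IsPmp G μ)
    (π : X → Measure X) (hπ : IsErgDecomp G μ π)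
    (α : ℕ → Set X) (hα : IsPartition α)
    (θ : X → G → ℕ) (hθmeas : Measurable θ)
    (hθ : ∀ (x : X) (g : G), g⁻¹ • x ∈ α (θ x g))
    (E : Set (Measure X)) (hE : (μ.map π) Eᶜ = 0)
    (hinj : Set.InjOn (fun ν : Measure X => Measure.map θ ν) E) :
    ∀ B : Set X, MeasurableSet B → (∀ g : G, (fun x => g • x) ⁻¹' B = B) →
      ∃ C, MeasurableSet[sigmaG G (Set.range α)] C ∧ μ (B ∆ C) = 0 := by
  have := hpmp.measurableConstSMul
  exact fun B => statement4_general (sigmaG_le (forall_mem_range.2 hα.1)) (invariantAlg_sigmaG _)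
    hpmp hπ (measurable_sigmaG_itinerary hα.2.1 hθ) hE hinj
end
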